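/- arXiv:1006.1561 — 2 statements merged into one kernel-verified Lean document; each statement's English description precedes it below -/
import Mathlib

section
/- Let f : ℝ → ℝ be differentiable on an open interval I containing [0,∞), let 0 ≤ a < b, suppose f' is integrable on [a,b], let p > 1 and q = p/(p-1), and suppose |f'|^q is m-convex on [0,∞) for some fixed m ∈ (0,1]. Then for every x ∈ [a,b], |f(x) - (1/(b-a))·∫_a^b f(u) du| ≤ (1/(p+1))^{1/p} · [ ((b-x)²/(b-a)) · ( min{ (|f'(b)|^q + m·|f'(x/m)|^q)/2 , (|f'(x)|^q + m·|f'(b/m)|^q)/2 } )^{1/q} + ((x-a)²/(b-a)) · ( min{ (|f'(a)|^q + m·|f'(x/m)|^q)/2 , (|f'(x)|^q + m·|f'(a/m)|^q)/2 } )^{1/q} ]. -/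
open MeasureTheory Set intervalIntegral

/-!
Integrating by parts along the segment from an endpoint `c ∈ {a, b}` to `x` gives
`(x - c) f(x) - ∫_c^x f = (x - c)² ∫_0^1 t f'(t x + (1 - t) c) dt`, and the difference of the
identities for `c = a` and `c = b` is `(b - a)` times the quantity to be estimated. Hölder's
inequality separates `‖t‖_p = (1 / (p + 1))^(1 / p)` from the `L^q` norm of `f'` along the segment.
Writing the point `t x + (1 - t) c` as `t x + m (1 - t) (c / m)` or as `(1 - t) c + m t (x / m)`,
`m`-convexity bounds `‖f'‖^q` there by an affine function of `t` in two ways, whose integrals are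
the two entries of the minimum.
-/

/-- `m`-convexity of `g` on `s`, the interpolation between convexity (`m = 1`) and
star-shapedness (`m → 0`). Classically `s` is `[0, ∞)` or `[0, d]` and `m ∈ (0, 1]`; neither is
built into the definition, which does not ask that `s` contain the points `t u + m (1 - t) v`. -/
def MConvexOn (m : ℝ) (s : Set ℝ) (g : ℝ → ℝ) : Prop :=
  ∀ u ∈ s, ∀ v ∈ s, ∀ t ∈ Icc (0 : ℝ) 1,
    g (t * u + m * (1 - t) * v) ≤ t * g u + m * (1 - t) * g v

lemma segment_param_mem_uIcc {t : ℝ} (ht : t ∈ Icc (0 : ℝ) 1) (x c : ℝ) :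
    t * x + (1 - t) * c ∈ uIcc c x :=
  convex_uIcc c x right_mem_uIcc left_mem_uIcc ht.1 (sub_nonneg.2 ht.2) (add_sub_cancel t 1)

lemma integral_le_half_add_of_le_affine {φ : ℝ → ℝ} {A B : ℝ}
    (hφ : IntervalIntegrable φ volume 0 1)
    (hle : ∀ t ∈ Icc (0 : ℝ) 1, φ t ≤ t * A + (1 - t) * B) :
    ∫ t in (0 : ℝ)..1, φ t ≤ (A + B) / 2 := by
  have h_affine : ∫ t in (0 : ℝ)..1, (t * A + (1 - t) * B) = (A + B) / 2 := by
    rw [integral_add (Continuous.intervalIntegrable (by fun_prop) _ _)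
        (Continuous.intervalIntegrable (by fun_prop) _ _),
      intervalIntegral.integral_mul_const, intervalIntegral.integral_mul_const,
      integral_comp_sub_left (fun t => t), sub_self, sub_zero, integral_id]
    ring
  rw [← h_affine]
  exact integral_mono_on zero_le_one hφ (Continuous.intervalIntegrable (by fun_prop) _ _) hle

namespace MConvexOn

variable {m : ℝ} {s : Set ℝ} {g : ℝ → ℝ} {u v : ℝ}

lemma le_affine (hg : MConvexOn m s g) (hm : m ≠ 0) (hu : u ∈ s) (hv : v / m ∈ s)
    {t : ℝ} (ht : t ∈ Icc (0 : ℝ) 1) :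
    g (t * u + (1 - t) * v) ≤ t * g u + (1 - t) * (m * g (v / m)) := by
  have h_rescaled : m * (1 - t) * (v / m) = (1 - t) * v := by field_simp
  have h_convex := hg u hu (v / m) hv t ht
  rw [h_rescaled] at h_convex
  linarith

lemma integral_segment_le (hg : MConvexOn m s g) (hm : m ≠ 0) (hu : u ∈ s) (hv : v / m ∈ s)
    (hint : IntervalIntegrable (fun t => g (t * u + (1 - t) * v)) volume 0 1) :
    ∫ t in (0 : ℝ)..1, g (t * u + (1 - t) * v) ≤ (g u + m * g (v / m)) / 2 :=
  integral_le_half_add_of_le_affine hint fun _ ht => hg.le_affine hm hu hv ht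

lemma integral_segment_le_min (hg : MConvexOn m s g) (hm : m ≠ 0)
    (hu : u ∈ s) (hum : u / m ∈ s) (hv : v ∈ s) (hvm : v / m ∈ s)
    (hint : IntervalIntegrable (fun t => g (t * u + (1 - t) * v)) volume 0 1) :
    ∫ t in (0 : ℝ)..1, g (t * u + (1 - t) * v) ≤
      min ((g v + m * g (u / m)) / 2) ((g u + m * g (v / m)) / 2) := by
  have hint_symm : IntervalIntegrable (fun t => g (t * v + (1 - t) * u)) volume 0 1 := by
    simpa [add_comm] using (hint.comp_sub_left 1).symm
  have h_symm : ∫ t in (0 : ℝ)..1, g (t * u + (1 - t) * v) =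
      ∫ t in (0 : ℝ)..1, g (t * v + (1 - t) * u) := by
    simpa [add_comm] using
      (integral_comp_sub_left (a := 0) (b := 1) (fun t => g (t * u + (1 - t) * v)) 1).symm
  refine le_min ?_ (hg.integral_segment_le hm hu hvm hint)
  exact h_symm.trans_le (hg.integral_segment_le hm hv hum hint_symm)

end MConvexOn

section Ostrowski

variable {E : Type*} [NormedAddCommGroup E] [NormedSpace ℝ E]
  {f f' : ℝ → E} {p q m a b c x : ℝ} {s : Set ℝ}

lemma norm_integral_smul_le_mul_Lq (hpq : p.HolderConjugate q) {h : ℝ → E}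
    (hh : MemLp h (ENNReal.ofReal q) (volume.restrict (Ioc 0 1))) :
    ‖∫ t in (0 : ℝ)..1, t • h t‖ ≤
      (1 / (p + 1)) ^ (1 / p) * (∫ t in (0 : ℝ)..1, ‖h t‖ ^ q) ^ (1 / q) := by
  have h_norm_id : ∀ t ∈ Ioc (0 : ℝ) 1, ‖t‖ = t := fun t ht => Real.norm_of_nonneg ht.1.le
  have h_id_memLp :
      MemLp (fun t : ℝ => t) (ENNReal.ofReal p) (volume.restrict (Ioc 0 1)) :=
    MemLp.of_bound aestronglyMeasurable_id 1 <|
      ae_restrict_of_forall_mem measurableSet_Ioc fun t ht => (h_norm_id t ht).trans_le ht.2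
  have h_Lp_id : ∫ t in Ioc (0 : ℝ) 1, ‖t‖ ^ p = 1 / (p + 1) := by
    rw [setIntegral_congr_fun measurableSet_Ioc fun t ht => congrArg (· ^ p) (h_norm_id t ht),
      ← integral_of_le zero_le_one, integral_rpow (Or.inl (by linarith [hpq.pos])),
      Real.one_rpow, Real.zero_rpow (by linarith [hpq.pos]), sub_zero]
  have h_hoelder := integral_mul_norm_le_Lp_mul_Lq hpq h_id_memLp hh.norm
  simp only [norm_norm, h_Lp_id] at h_hoelder
  rw [integral_of_le zero_le_one, integral_of_le zero_le_one]
  refine (MeasureTheory.norm_integral_le_integral_norm _).trans ?_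
  simpa only [norm_smul] using h_hoelder

lemma sub_average_eq_smul_sub (hab : a ≠ b) (hax : IntervalIntegrable f volume a x)
    (hxb : IntervalIntegrable f volume x b) :
    f x - (1 / (b - a)) • ∫ u in a..b, f u =
      (1 / (b - a)) • (((x - a) • f x - ∫ u in a..x, f u) -
        ((x - b) • f x - ∫ u in b..x, f u)) := by
  have hba : b - a ≠ 0 := sub_ne_zero.2 hab.symm
  have h_length : f x = (1 / (b - a)) • ((x - a) • f x - (x - b) • f x) := by
    rw [← sub_smul, smul_smul, sub_sub_sub_cancel_left, one_div_mul_cancel hba, one_smul]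
  rw [← integral_add_adjacent_intervals hax hxb, integral_symm x b]
  nth_rw 1 [h_length]
  module

variable [CompleteSpace E]

lemma aestronglyMeasurable_segment_of_hasDerivAt
    (hf : ∀ y ∈ uIcc c x, HasDerivAt f (f' y) y) :
    AEStronglyMeasurable (fun t => f' (t * x + (1 - t) * c)) (volume.restrict (Ioc 0 1)) := by
  have h_deriv : AEStronglyMeasurable (fun t : ℝ => deriv f (t * x + (1 - t) * c))
      (volume.restrict (Ioc 0 1)) :=
    ((stronglyMeasurable_deriv f).comp_measurable (by fun_prop)).aestronglyMeasurable
  refine h_deriv.congr (ae_restrict_of_forall_mem measurableSet_Ioc fun t ht => ?_)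
  exact (hf _ (segment_param_mem_uIcc (Ioc_subset_Icc_self ht) x c)).deriv

lemma memLp_segment_of_mConvexOn_norm_rpow (hf : ∀ y ∈ uIcc c x, HasDerivAt f (f' y) y)
    (hq : 0 < q) (hm : 0 < m) (hconv : MConvexOn m s fun y => ‖f' y‖ ^ q)
    (hx : x ∈ s) (hcm : c / m ∈ s) (r : ENNReal) :
    MemLp (fun t => f' (t * x + (1 - t) * c)) r (volume.restrict (Ioc 0 1)) := by
  refine MemLp.of_bound (aestronglyMeasurable_segment_of_hasDerivAt hf)
    ((‖f' x‖ ^ q + m * ‖f' (c / m)‖ ^ q) ^ q⁻¹)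
    (ae_restrict_of_forall_mem measurableSet_Ioc fun t ht => ?_)
  rw [Real.le_rpow_inv_iff_of_pos (norm_nonneg _) (by positivity) hq]
  refine (hconv.le_affine hm.ne' hx hcm (Ioc_subset_Icc_self ht)).trans (add_le_add ?_ ?_)
  · exact mul_le_of_le_one_left (by positivity) ht.2
  · exact mul_le_of_le_one_left (by positivity) (sub_le_self 1 ht.1.le)

lemma sub_smul_sub_integral_eq_sq_smul_integral
    (hf : ∀ y ∈ uIcc c x, HasDerivAt f (f' y) y)
    (hint : IntervalIntegrable (fun t => f' (t * x + (1 - t) * c)) volume 0 1) :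
    (x - c) • f x - ∫ u in c..x, f u =
      (x - c) ^ 2 • ∫ t in (0 : ℝ)..1, t • f' (t * x + (1 - t) * c) := by
  have h_path (t : ℝ) : HasDerivAt (fun t => t * x + (1 - t) * c) (x - c) t :=
    (((hasDerivAt_id' t).mul_const x).fun_add
      (((hasDerivAt_id' t).const_sub 1).mul_const c)).congr_deriv (by ring)
  have h_comp : ∀ t ∈ uIcc (0 : ℝ) 1, HasDerivAt (fun t => f (t * x + (1 - t) * c))
      ((x - c) • f' (t * x + (1 - t) * c)) t := fun t ht =>
    (hf _ (segment_param_mem_uIcc (by rwa [uIcc_of_le zero_le_one] at ht) x c)).scomp t (h_path t)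
  have h_parts := integral_smul_deriv_eq_deriv_smul (fun t _ => hasDerivAt_id t) h_comp
    intervalIntegrable_const (hint.smul (x - c))
  have h_subst : (x - c) • ∫ t in (0 : ℝ)..1, f (t * x + (1 - t) * c) = ∫ u in c..x, f u := by
    have h_affine := smul_integral_comp_mul_add (a := 0) (b := 1) f (x - c) c
    simp only [mul_zero, mul_one, zero_add, sub_add_cancel] at h_affine
    rw [← h_affine]
    congr! 4
    ring
  simp only [id, one_smul, zero_smul, one_mul, sub_self, zero_mul, add_zero, sub_zero,
    smul_comm _ (x - c), intervalIntegral.integral_smul] at h_parts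
  rw [sq, mul_smul, h_parts, smul_sub, h_subst]

theorem norm_sub_smul_sub_integral_le (hpq : p.HolderConjugate q)
    (hf : ∀ y ∈ uIcc c x, HasDerivAt f (f' y) y)
    (hm : 0 < m) (hconv : MConvexOn m s fun y => ‖f' y‖ ^ q)
    (hx : x ∈ s) (hxm : x / m ∈ s) (hc : c ∈ s) (hcm : c / m ∈ s) :
    ‖(x - c) • f x - ∫ u in c..x, f u‖ ≤
      (x - c) ^ 2 * ((1 / (p + 1)) ^ (1 / p) *
        (min ((‖f' c‖ ^ q + m * ‖f' (x / m)‖ ^ q) / 2)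
          ((‖f' x‖ ^ q + m * ‖f' (c / m)‖ ^ q) / 2)) ^ (1 / q)) := by
  have hp : 0 < p := hpq.pos
  have hq : 0 < q := hpq.symm.pos
  have h_memLp := memLp_segment_of_mConvexOn_norm_rpow hf hq hm hconv hx hcm
  have h_integrable : IntervalIntegrable (fun t => f' (t * x + (1 - t) * c)) volume 0 1 :=
    (intervalIntegrable_iff_integrableOn_Ioc_of_le zero_le_one).2
      (memLp_one_iff_integrable.1 (h_memLp 1))
  have h_rpow_integrable :
      IntervalIntegrable (fun t => ‖f' (t * x + (1 - t) * c)‖ ^ q) volume 0 1 := by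
    rw [intervalIntegrable_iff_integrableOn_Ioc_of_le zero_le_one]
    simpa only [IntegrableOn, ENNReal.toReal_ofReal hq.le] using
      (h_memLp (ENNReal.ofReal q)).integrable_norm_rpow'
  rw [sub_smul_sub_integral_eq_sq_smul_integral hf h_integrable, norm_smul,
    Real.norm_of_nonneg (sq_nonneg _)]
  gcongr
  refine (norm_integral_smul_le_mul_Lq hpq (h_memLp _)).trans ?_
  gcongr
  · exact integral_nonneg zero_le_one fun t _ => by positivity
  · exact hconv.integral_segment_le_min hm.ne' hx hxm hc hcm h_rpow_integrable

theorem stmt_5_general (hpq : p.HolderConjugate q) (hab : a < b)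
    (hf : ∀ y ∈ Icc a b, HasDerivAt f (f' y) y)
    (hm : 0 < m) (hconv : MConvexOn m s fun y => ‖f' y‖ ^ q)
    (hs : ∀ y ∈ Icc a b, y ∈ s ∧ y / m ∈ s) (hx : x ∈ Icc a b) :
    ‖f x - (1 / (b - a)) • ∫ u in a..b, f u‖ ≤
      (1 / (p + 1)) ^ (1 / p) *
        (((b - x) ^ 2 / (b - a)) *
            (min ((‖f' b‖ ^ q + m * ‖f' (x / m)‖ ^ q) / 2)
              ((‖f' x‖ ^ q + m * ‖f' (b / m)‖ ^ q) / 2)) ^ (1 / q)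
          + ((x - a) ^ 2 / (b - a)) *
            (min ((‖f' a‖ ^ q + m * ‖f' (x / m)‖ ^ q) / 2)
              ((‖f' x‖ ^ q + m * ‖f' (a / m)‖ ^ q) / 2)) ^ (1 / q)) := by
  have h_subset {c : ℝ} (hc : c ∈ Icc a b) : uIcc c x ⊆ Icc a b := uIcc_subset_Icc hc hx
  have h_integrable {c : ℝ} (hc : c ∈ Icc a b) : IntervalIntegrable f volume c x :=
    ContinuousOn.intervalIntegrable fun y hy =>
      (hf y (h_subset hc hy)).continuousAt.continuousWithinAt
  have h_endpoint {c : ℝ} (hc : c ∈ Icc a b) :=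
    norm_sub_smul_sub_integral_le hpq (fun y hy => hf y (h_subset hc hy)) hm hconv
      (hs x hx).1 (hs x hx).2 (hs c hc).1 (hs c hc).2
  have ha : a ∈ Icc a b := left_mem_Icc.2 hab.le
  have hb : b ∈ Icc a b := right_mem_Icc.2 hab.le
  have hba : 0 < 1 / (b - a) := one_div_pos.2 (sub_pos.2 hab)
  rw [sub_average_eq_smul_sub hab.ne (h_integrable ha) (h_integrable hb).symm, norm_smul,
    Real.norm_of_nonneg hba.le]
  refine (mul_le_mul_of_nonneg_left ((norm_sub_le _ _).trans
    (add_le_add (h_endpoint ha) (h_endpoint hb))) hba.le).trans_eq ?_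
  ring

end Ostrowski

/-- Theorem 2.2: Ostrowski-type inequality via Hölder's inequality for `|f'|^q`
`m`-convex on `[0,∞)`, where `q = p/(p-1)`. -/
theorem stmt_5 (f : ℝ → ℝ) (I : Set ℝ) (hIopen : IsOpen I) (hIconn : I.OrdConnected)
    (hIci : Set.Ici (0:ℝ) ⊆ I) (hf : ∀ y ∈ I, DifferentiableAt ℝ f y)
    (a b : ℝ) (ha : 0 ≤ a) (hab : a < b)
    (hint : IntervalIntegrable (deriv f) volume a b)
    (p q : ℝ) (hp : 1 < p) (hq : q = p / (p - 1))
    (m : ℝ) (hm0 : 0 < m) (hm1 : m ≤ 1)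
    (hmc : ∀ u ∈ Set.Ici (0:ℝ), ∀ v ∈ Set.Ici (0:ℝ), ∀ t ∈ Set.Icc (0:ℝ) 1,
      |deriv f (t * u + m * (1 - t) * v)| ^ q ≤
        t * |deriv f u| ^ q + m * (1 - t) * |deriv f v| ^ q)
    (x : ℝ) (hx : x ∈ Set.Icc a b) :
    |f x - (1 / (b - a)) * ∫ u in a..b, f u| ≤
      (1 / (p + 1)) ^ (1 / p) *
        (((b - x) ^ 2 / (b - a)) *
            (min ((|deriv f b| ^ q + m * |deriv f (x / m)| ^ q) / 2)
              ((|deriv f x| ^ q + m * |deriv f (b / m)| ^ q) / 2)) ^ (1 / q)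
          + ((x - a) ^ 2 / (b - a)) *
            (min ((|deriv f a| ^ q + m * |deriv f (x / m)| ^ q) / 2)
              ((|deriv f x| ^ q + m * |deriv f (a / m)| ^ q) / 2)) ^ (1 / q)) := by
  have hpq : p.HolderConjugate q := (Real.holderConjugate_iff_eq_conjExponent hp).2 hq
  exact stmt_5_general hpq hab (fun y hy => (hf y (hIci (ha.trans hy.1))).hasDerivAt) hm0 hmc
    (fun y hy => ⟨ha.trans hy.1, div_nonneg (ha.trans hy.1) hm0.le⟩) hx
end

section
/- Let f : ℝ → ℝ be differentiable on an open interval I containing [0,∞), let 0 ≤ a < b, suppose f' is integrable on [a,b], let p > 1 and q = p/(p-1), suppose |f'|^q is convex on [a,b], and suppose |f'| is monotone increasing on [a,b]. Then |f((a+b)/2) - (1/(b-a))·∫_a^b f(u) du| ≤ ((b-a)/2)·|f'(b)|. -/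
open MeasureTheory Set intervalIntegral

/-!
The distance of `f x` from the mean of `f` over `[a, b]` is at most the mean of `‖f x - f t‖`. If
`f` is `K`-Lipschitz, this is at most `K` times the mean of `|x - t|`, which gives Ostrowski's
inequality; at the midpoint the mean of `|x - t|` is `(b - a) / 4`. Monotonicity of `‖f'‖` makes
`‖f' b‖` a Lipschitz constant.
-/

theorem integral_abs_sub_of_mem_Icc {a b x : ℝ} (hx : x ∈ Icc a b) :
    ∫ t in a..b, |x - t| = ((x - a) ^ 2 + (b - x) ^ 2) / 2 := by
  have hcont : Continuous fun t : ℝ ↦ |x - t| := by fun_prop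
  have hleft : ∫ t in a..x, |x - t| = (x - a) ^ 2 / 2 := calc
    ∫ t in a..x, |x - t| = ∫ t in a..x, (x - t) := integral_congr fun t ht ↦
      abs_of_nonneg (sub_nonneg.2 (uIcc_of_le hx.1 ▸ ht).2)
    _ = (x - a) ^ 2 / 2 := by
      rw [integral_comp_sub_left (fun t ↦ t), integral_id]; ring
  have hright : ∫ t in x..b, |x - t| = (b - x) ^ 2 / 2 := calc
    ∫ t in x..b, |x - t| = ∫ t in x..b, (t - x) := integral_congr fun t ht ↦
      (abs_sub_comm x t).trans (abs_of_nonneg (sub_nonneg.2 (uIcc_of_le hx.2 ▸ ht).1))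
    _ = (b - x) ^ 2 / 2 := by
      rw [integral_comp_sub_right (fun t ↦ t), integral_id]; ring
  rw [← integral_add_adjacent_intervals (hcont.intervalIntegrable a x)
    (hcont.intervalIntegrable x b), hleft, hright, add_div]

section Ostrowski

variable {E : Type*} [NormedAddCommGroup E] [NormedSpace ℝ E]
  {f f' : ℝ → E} {a b : ℝ}

theorem lipschitzOnWith_of_monotoneOn_norm_hasDerivWithinAt (hab : a ≤ b)
    (hf : ∀ x ∈ Icc a b, HasDerivWithinAt f (f' x) (Icc a b) x)
    (hmono : MonotoneOn (fun x ↦ ‖f' x‖) (Icc a b)) :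
    LipschitzOnWith ‖f' b‖₊ f (Icc a b) :=
  (convex_Icc a b).lipschitzOnWith_of_nnnorm_hasDerivWithin_le hf fun _ hx ↦
    hmono hx (right_mem_Icc.2 hab) hx.2

variable [CompleteSpace E]

theorem sub_intervalAverage_eq (hab : a ≠ b) (hf : IntervalIntegrable f volume a b) (c : E) :
    c - ⨍ t in a..b, f t = ⨍ t in a..b, (c - f t) := by
  rw [interval_average_eq, interval_average_eq, integral_sub intervalIntegrable_const hf,
    intervalIntegral.integral_const, smul_sub, inv_smul_smul₀ (sub_ne_zero.2 hab.symm)]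

/-- **Ostrowski's inequality** for Lipschitz functions. -/
theorem norm_sub_intervalAverage_le_of_lipschitzOnWith {K : NNReal} (hab : a < b)
    (hf : LipschitzOnWith K f (Icc a b)) {x : ℝ} (hx : x ∈ Icc a b) :
    ‖f x - ⨍ t in a..b, f t‖ ≤ K * (((x - a) ^ 2 + (b - x) ^ 2) / (2 * (b - a))) := by
  have hint : IntervalIntegrable f volume a b :=
    hf.continuousOn.intervalIntegrable_of_Icc hab.le
  have hpointwise : ∀ t ∈ Ioc a b, ‖f x - f t‖ ≤ K * |x - t| := fun t ht ↦
    hf.norm_sub_le hx (Ioc_subset_Icc_self ht)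
  have hintegral : ‖∫ t in a..b, (f x - f t)‖ ≤ K * (((x - a) ^ 2 + (b - x) ^ 2) / 2) := calc
    ‖∫ t in a..b, (f x - f t)‖ ≤ ∫ t in a..b, K * |x - t| :=
      norm_integral_le_of_norm_le hab.le (.of_forall hpointwise)
        (Continuous.intervalIntegrable (by fun_prop) a b)
    _ = K * (((x - a) ^ 2 + (b - x) ^ 2) / 2) := by
      rw [intervalIntegral.integral_const_mul, integral_abs_sub_of_mem_Icc hx]
  have hpos : 0 < b - a := sub_pos.2 hab
  calc ‖f x - ⨍ t in a..b, f t‖ = (b - a)⁻¹ * ‖∫ t in a..b, (f x - f t)‖ := by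
        rw [sub_intervalAverage_eq hab.ne hint, interval_average_eq, norm_smul,
          Real.norm_of_nonneg (inv_nonneg.2 hpos.le)]
    _ ≤ (b - a)⁻¹ * (K * (((x - a) ^ 2 + (b - x) ^ 2) / 2)) := by gcongr
    _ = K * (((x - a) ^ 2 + (b - x) ^ 2) / (2 * (b - a))) := by field_simp

theorem norm_midpoint_sub_intervalAverage_le_of_lipschitzOnWith {K : NNReal} (hab : a < b)
    (hf : LipschitzOnWith K f (Icc a b)) :
    ‖f ((a + b) / 2) - ⨍ t in a..b, f t‖ ≤ (b - a) / 4 * K := by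
  have hmid : (a + b) / 2 ∈ Icc a b := ⟨by linarith, by linarith⟩
  have hne : b - a ≠ 0 := sub_ne_zero.2 hab.ne'
  calc ‖f ((a + b) / 2) - ⨍ t in a..b, f t‖
      ≤ K * ((((a + b) / 2 - a) ^ 2 + (b - (a + b) / 2) ^ 2) / (2 * (b - a))) :=
        norm_sub_intervalAverage_le_of_lipschitzOnWith hab hf hmid
    _ = (b - a) / 4 * K := by field_simp; ring

theorem stmt_8_general (hab : a < b)
    (hf : ∀ x ∈ Icc a b, HasDerivWithinAt f (f' x) (Icc a b) x)
    (hmono : MonotoneOn (fun x ↦ ‖f' x‖) (Icc a b)) :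
    ‖f ((a + b) / 2) - ⨍ t in a..b, f t‖ ≤ (b - a) / 4 * ‖f' b‖ :=
  norm_midpoint_sub_intervalAverage_le_of_lipschitzOnWith hab
    (lipschitzOnWith_of_monotoneOn_norm_hasDerivWithinAt hab.le hf hmono)

end Ostrowski

/-- Remark 2.4 (D): `|f'|^q` convex on `[a,b]` and `|f'|` increasing. -/
theorem stmt_8 (f : ℝ → ℝ) (I : Set ℝ) (hIopen : IsOpen I) (hIconn : I.OrdConnected)
    (hIci : Set.Ici (0:ℝ) ⊆ I) (hf : ∀ y ∈ I, DifferentiableAt ℝ f y)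
    (a b : ℝ) (ha : 0 ≤ a) (hab : a < b)
    (hint : IntervalIntegrable (deriv f) volume a b)
    (p q : ℝ) (hp : 1 < p) (hq : q = p / (p - 1))
    (hconv : ConvexOn ℝ (Set.Icc a b) (fun u => |deriv f u| ^ q))
    (hmono : MonotoneOn (fun u => |deriv f u|) (Set.Icc a b)) :
    |f ((a + b) / 2) - (1 / (b - a)) * ∫ u in a..b, f u| ≤
      ((b - a) / 2) * |deriv f b| := by
  have hderiv : ∀ x ∈ Icc a b, HasDerivWithinAt f (deriv f x) (Icc a b) x := fun x hx ↦
    (hf x (hIci (ha.trans hx.1))).hasDerivAt.hasDerivWithinAt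
  calc |f ((a + b) / 2) - (1 / (b - a)) * ∫ u in a..b, f u|
      = ‖f ((a + b) / 2) - ⨍ u in a..b, f u‖ := by
        rw [interval_average_eq, one_div, smul_eq_mul, Real.norm_eq_abs]
    _ ≤ (b - a) / 4 * |deriv f b| := stmt_8_general hab hderiv hmono
    _ ≤ (b - a) / 2 * |deriv f b| := by gcongr; linarith
end
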